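/- Let A be a differential graded Poisson algebra over a field k. Then A^e ≅ A^E as differential graded algebras. Explicitly, the map α : A^e → A^E determined by α(m_a) = class of a#1 and α(h_a) = class of 1#a is a well-defined differential graded algebra isomorphism, with inverse β induced by β(a#f) = m_a·h̃(f), where h̃ : U(A) → A^e is the differential graded algebra map induced by the DG Lie algebra map a ↦ h_a. -/

import Mathlib

open scoped TensorProduct

noncomputable section

namespace DGPaper

universe u

/-- A differential graded Lie algebra structure on a `k`-vector space `V`. -/
structure DGLAOn (k : Type u) [Field k] (V : Type u) [AddCommGroup V] [Module k V] where
  gr : ℤ → Submodule k V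
  decomp : DirectSum.Decomposition gr
  br : V →ₗ[k] V →ₗ[k] V
  br_mem : ∀ {i j : ℤ} {a b : V}, a ∈ gr i → b ∈ gr j → br a b ∈ gr (i + j)
  br_antisymm : ∀ {i j : ℤ} {a b : V}, a ∈ gr i → b ∈ gr j →
    br a b = -(((-1 : k) ^ (i * j)) • br b a)
  br_jacobi : ∀ {i j l : ℤ} {a b c : V}, a ∈ gr i → b ∈ gr j → c ∈ gr l →
    br a (br b c) = br (br a b) c + ((-1 : k) ^ (i * j)) • br b (br a c)
  d : V →ₗ[k] V
  d_mem : ∀ {i : ℤ} {a : V}, a ∈ gr i → d a ∈ gr (i + 1)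
  d_sq : ∀ a : V, d (d a) = 0
  d_br : ∀ {i j : ℤ} {a b : V}, a ∈ gr i → b ∈ gr j →
    d (br a b) = br (d a) b + ((-1 : k) ^ i) • br a (d b)

/-- A differential graded (associative, unital) algebra structure on a `k`-vector space `N`. -/
structure DGAOn (k : Type u) [Field k] (N : Type u) [AddCommGroup N] [Module k N] where
  gr : ℤ → Submodule k N
  decomp : DirectSum.Decomposition gr
  mul : N →ₗ[k] N →ₗ[k] N
  one : N
  one_mem : one ∈ gr 0
  mul_mem : ∀ {i j : ℤ} {a b : N}, a ∈ gr i → b ∈ gr j → mul a b ∈ gr (i + j)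
  mul_assoc : ∀ a b c : N, mul (mul a b) c = mul a (mul b c)
  one_mul : ∀ a : N, mul one a = a
  mul_one : ∀ a : N, mul a one = a
  d : N →ₗ[k] N
  d_mem : ∀ {i : ℤ} {a : N}, a ∈ gr i → d a ∈ gr (i + 1)
  d_sq : ∀ a : N, d (d a) = 0
  d_mul : ∀ {i j : ℤ} {a b : N}, a ∈ gr i → b ∈ gr j →
    d (mul a b) = mul (d a) b + ((-1 : k) ^ i) • mul a (d b)

/-- A differential graded Poisson algebra structure on a `k`-vector space `M`. -/
structure DGPAOn (k : Type u) [Field k] (M : Type u) [AddCommGroup M] [Module k M] where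
  gr : ℤ → Submodule k M
  decomp : DirectSum.Decomposition gr
  mul : M →ₗ[k] M →ₗ[k] M
  one : M
  one_mem : one ∈ gr 0
  mul_mem : ∀ {i j : ℤ} {a b : M}, a ∈ gr i → b ∈ gr j → mul a b ∈ gr (i + j)
  mul_assoc : ∀ a b c : M, mul (mul a b) c = mul a (mul b c)
  one_mul : ∀ a : M, mul one a = a
  mul_one : ∀ a : M, mul a one = a
  mul_comm : ∀ {i j : ℤ} {a b : M}, a ∈ gr i → b ∈ gr j →
    mul a b = ((-1 : k) ^ (i * j)) • mul b a
  br : M →ₗ[k] M →ₗ[k] M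
  br_mem : ∀ {i j : ℤ} {a b : M}, a ∈ gr i → b ∈ gr j → br a b ∈ gr (i + j)
  br_antisymm : ∀ {i j : ℤ} {a b : M}, a ∈ gr i → b ∈ gr j →
    br a b = -(((-1 : k) ^ (i * j)) • br b a)
  br_jacobi : ∀ {i j l : ℤ} {a b c : M}, a ∈ gr i → b ∈ gr j → c ∈ gr l →
    br a (br b c) = br (br a b) c + ((-1 : k) ^ (i * j)) • br b (br a c)
  br_deriv : ∀ {i j l : ℤ} {a b c : M}, a ∈ gr i → b ∈ gr j → c ∈ gr l →
    br a (mul b c) = mul (br a b) c + ((-1 : k) ^ (i * j)) • mul b (br a c)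
  d : M →ₗ[k] M
  d_mem : ∀ {i : ℤ} {a : M}, a ∈ gr i → d a ∈ gr (i + 1)
  d_sq : ∀ a : M, d (d a) = 0
  d_br : ∀ {i j : ℤ} {a b : M}, a ∈ gr i → b ∈ gr j →
    d (br a b) = br (d a) b + ((-1 : k) ^ i) • br a (d b)
  d_mul : ∀ {i j : ℤ} {a b : M}, a ∈ gr i → b ∈ gr j →
    d (mul a b) = mul (d a) b + ((-1 : k) ^ i) • mul a (d b)

section Defs

variable {k : Type u} [Field k]

/-- The differential graded Lie algebra underlying a differential graded Poisson algebra. -/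
def DGPAOn.toLie {M : Type u} [AddCommGroup M] [Module k M] (P : DGPAOn k M) :
    DGLAOn k M where
  gr := P.gr
  decomp := P.decomp
  br := P.br
  br_mem := P.br_mem
  br_antisymm := P.br_antisymm
  br_jacobi := P.br_jacobi
  d := P.d
  d_mem := P.d_mem
  d_sq := P.d_sq
  d_br := P.d_br

section Maps

variable {M N : Type u} [AddCommGroup M] [Module k M] [AddCommGroup N] [Module k N]

/-- A morphism of differential graded algebras (degree-0, multiplicative, unital,
commuting with the differentials). -/
def IsDGAHom (E : DGAOn k M) (F : DGAOn k N) (f : M →ₗ[k] N) : Prop :=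
  (∀ {n : ℤ} {x : M}, x ∈ E.gr n → f x ∈ F.gr n) ∧
  (∀ x y : M, f (E.mul x y) = F.mul (f x) (f y)) ∧
  f E.one = F.one ∧
  ∀ x : M, f (E.d x) = F.d (f x)

/-- A morphism of differential graded Poisson algebras. -/
def IsDGPAHom (P : DGPAOn k M) (Q : DGPAOn k N) (f : M →ₗ[k] N) : Prop :=
  (∀ {n : ℤ} {x : M}, x ∈ P.gr n → f x ∈ Q.gr n) ∧
  (∀ x y : M, f (P.mul x y) = Q.mul (f x) (f y)) ∧
  f P.one = Q.one ∧
  (∀ x : M, f (P.d x) = Q.d (f x)) ∧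
  ∀ x y : M, f (P.br x y) = Q.br (f x) (f y)

end Maps

section Tensor

variable {A B : Type u} [AddCommGroup A] [Module k A] [AddCommGroup B] [Module k B]

/-- `R` is the tensor product differential graded Poisson algebra structure on `A ⊗[k] B`
induced by `P` and `Q`. -/
def IsTensorDGPA (P : DGPAOn k A) (Q : DGPAOn k B) (R : DGPAOn k (A ⊗[k] B)) : Prop :=
  (∀ n : ℤ, R.gr n = Submodule.span k {z : A ⊗[k] B |
      ∃ (i j : ℤ) (a : A) (b : B), i + j = n ∧ a ∈ P.gr i ∧ b ∈ Q.gr j ∧ z = a ⊗ₜ[k] b}) ∧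
  R.one = P.one ⊗ₜ[k] Q.one ∧
  (∀ {i j i' j' : ℤ} {a a' : A} {b b' : B},
      a ∈ P.gr i → b ∈ Q.gr j → a' ∈ P.gr i' → b' ∈ Q.gr j' →
    R.mul (a ⊗ₜ[k] b) (a' ⊗ₜ[k] b') = ((-1 : k) ^ (i' * j)) • (P.mul a a' ⊗ₜ[k] Q.mul b b')) ∧
  (∀ {i j : ℤ} {a : A} {b : B}, a ∈ P.gr i → b ∈ Q.gr j →
    R.d (a ⊗ₜ[k] b) = P.d a ⊗ₜ[k] b + ((-1 : k) ^ i) • (a ⊗ₜ[k] Q.d b)) ∧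
  (∀ {i j i' j' : ℤ} {a a' : A} {b b' : B},
      a ∈ P.gr i → b ∈ Q.gr j → a' ∈ P.gr i' → b' ∈ Q.gr j' →
    R.br (a ⊗ₜ[k] b) (a' ⊗ₜ[k] b') =
      ((-1 : k) ^ (i' * j)) • (P.br a a' ⊗ₜ[k] Q.mul b b' + P.mul a a' ⊗ₜ[k] Q.br b b'))

/-- `G` is the tensor product differential graded algebra structure on `A ⊗[k] B`
induced by `E` and `F` (with the Koszul sign rule). -/
def IsTensorDGA (E : DGAOn k A) (F : DGAOn k B) (G : DGAOn k (A ⊗[k] B)) : Prop :=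
  (∀ n : ℤ, G.gr n = Submodule.span k {z : A ⊗[k] B |
      ∃ (i j : ℤ) (x : A) (y : B), i + j = n ∧ x ∈ E.gr i ∧ y ∈ F.gr j ∧ z = x ⊗ₜ[k] y}) ∧
  G.one = E.one ⊗ₜ[k] F.one ∧
  (∀ {i j i' j' : ℤ} {x x' : A} {y y' : B},
      x ∈ E.gr i → y ∈ F.gr j → x' ∈ E.gr i' → y' ∈ F.gr j' →
    G.mul (x ⊗ₜ[k] y) (x' ⊗ₜ[k] y') = ((-1 : k) ^ (i' * j)) • (E.mul x x' ⊗ₜ[k] F.mul y y')) ∧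
  (∀ {i j : ℤ} {x : A} {y : B}, x ∈ E.gr i → y ∈ F.gr j →
    G.d (x ⊗ₜ[k] y) = E.d x ⊗ₜ[k] y + ((-1 : k) ^ i) • (x ⊗ₜ[k] F.d y))

end Tensor

section Env

variable {M : Type u} [AddCommGroup M] [Module k M]

/-- The defining relations of the universal enveloping algebra `A^e` of a differential
graded Poisson algebra, imposed on the tensor algebra of `M × M`; the first copy of `M`
gives the generators `m_a`, the second copy the generators `h_a`. -/
inductive EnvRel (P : DGPAOn k M) :
    TensorAlgebra k (M × M) → TensorAlgebra k (M × M) → Prop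
  | relone : EnvRel P (TensorAlgebra.ι k ((P.one, 0) : M × M)) 1
  | relmul (a b : M) :
      EnvRel P (TensorAlgebra.ι k ((P.mul a b, 0) : M × M))
        (TensorAlgebra.ι k ((a, 0) : M × M) * TensorAlgebra.ι k ((b, 0) : M × M))
  | relhmul {i j : ℤ} {a b : M} (ha : a ∈ P.gr i) (hb : b ∈ P.gr j) :
      EnvRel P (TensorAlgebra.ι k ((0, P.mul a b) : M × M))
        (TensorAlgebra.ι k ((a, 0) : M × M) * TensorAlgebra.ι k ((0, b) : M × M) +
          ((-1 : k) ^ (i * j)) •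
            (TensorAlgebra.ι k ((b, 0) : M × M) * TensorAlgebra.ι k ((0, a) : M × M)))
  | relmbr {i j : ℤ} {a b : M} (ha : a ∈ P.gr i) (hb : b ∈ P.gr j) :
      EnvRel P (TensorAlgebra.ι k ((P.br a b, 0) : M × M))
        (TensorAlgebra.ι k ((0, a) : M × M) * TensorAlgebra.ι k ((b, 0) : M × M) -
          ((-1 : k) ^ (i * j)) •
            (TensorAlgebra.ι k ((b, 0) : M × M) * TensorAlgebra.ι k ((0, a) : M × M)))
  | relhbr {i j : ℤ} {a b : M} (ha : a ∈ P.gr i) (hb : b ∈ P.gr j) :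
      EnvRel P (TensorAlgebra.ι k ((0, P.br a b) : M × M))
        (TensorAlgebra.ι k ((0, a) : M × M) * TensorAlgebra.ι k ((0, b) : M × M) -
          ((-1 : k) ^ (i * j)) •
            (TensorAlgebra.ι k ((0, b) : M × M) * TensorAlgebra.ι k ((0, a) : M × M)))

/-- The universal enveloping algebra `A^e` of a differential graded Poisson algebra,
as a quotient of the tensor algebra on two copies of `A`. -/
abbrev Env (P : DGPAOn k M) : Type u := RingQuot (EnvRel P)

/-- The generators `m_a` of `A^e`. -/
def mgen (P : DGPAOn k M) : M →ₗ[k] Env P :=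
  (RingQuot.mkAlgHom k (EnvRel P)).toLinearMap ∘ₗ
    ((TensorAlgebra.ι k : (M × M) →ₗ[k] TensorAlgebra k (M × M)) ∘ₗ LinearMap.inl k M M)

/-- The generators `h_a` of `A^e`. -/
def hgen (P : DGPAOn k M) : M →ₗ[k] Env P :=
  (RingQuot.mkAlgHom k (EnvRel P)).toLinearMap ∘ₗ
    ((TensorAlgebra.ι k : (M × M) →ₗ[k] TensorAlgebra k (M × M)) ∘ₗ LinearMap.inr k M M)

/-- `E` is the differential graded algebra structure on `A^e`, with the ring
multiplication of `A^e`, grading `|m_a| = |h_a| = |a|` and differential determined by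
`∂(m_a) = m_{d a}`, `∂(h_a) = h_{d a}` and the graded Leibniz rule. -/
def IsEnvDGA (P : DGPAOn k M) (E : DGAOn k (Env P)) : Prop :=
  (∀ x y : Env P, E.mul x y = x * y) ∧
  E.one = 1 ∧
  (∀ {i : ℤ} {a : M}, a ∈ P.gr i → mgen P a ∈ E.gr i) ∧
  (∀ {i : ℤ} {a : M}, a ∈ P.gr i → hgen P a ∈ E.gr i) ∧
  (∀ a : M, E.d (mgen P a) = mgen P (P.d a)) ∧
  (∀ a : M, E.d (hgen P a) = hgen P (P.d a))

end Env

section Lie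

variable {V : Type u} [AddCommGroup V] [Module k V]

/-- The defining relations of the universal enveloping algebra of a differential graded
Lie algebra. -/
inductive LieRel (L : DGLAOn k V) : TensorAlgebra k V → TensorAlgebra k V → Prop
  | rel {i j : ℤ} {a b : V} (ha : a ∈ L.gr i) (hb : b ∈ L.gr j) :
      LieRel L
        (TensorAlgebra.ι k a * TensorAlgebra.ι k b -
          ((-1 : k) ^ (i * j)) • (TensorAlgebra.ι k b * TensorAlgebra.ι k a))
        (TensorAlgebra.ι k (L.br a b))

/-- The universal enveloping algebra `U(L)` of a differential graded Lie algebra `L`. -/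
abbrev ULie (L : DGLAOn k V) : Type u := RingQuot (LieRel L)

/-- The canonical map `L → U(L)`. -/
def uGen (L : DGLAOn k V) : V →ₗ[k] ULie L :=
  (RingQuot.mkAlgHom k (LieRel L)).toLinearMap ∘ₗ TensorAlgebra.ι k

/-- `E` is the differential graded algebra structure of `U(L)`. -/
def IsULieDGA (L : DGLAOn k V) (E : DGAOn k (ULie L)) : Prop :=
  (∀ x y : ULie L, E.mul x y = x * y) ∧
  E.one = 1 ∧
  (∀ {i : ℤ} {a : V}, a ∈ L.gr i → uGen L a ∈ E.gr i) ∧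
  (∀ a : V, E.d (uGen L a) = uGen L (L.d a))

/-- The graded-symmetry relations defining the graded symmetric algebra of `L`. -/
inductive SymRel (L : DGLAOn k V) : TensorAlgebra k V → TensorAlgebra k V → Prop
  | rel {i j : ℤ} {a b : V} (ha : a ∈ L.gr i) (hb : b ∈ L.gr j) :
      SymRel L (TensorAlgebra.ι k a * TensorAlgebra.ι k b)
        (((-1 : k) ^ (i * j)) • (TensorAlgebra.ι k b * TensorAlgebra.ι k a))

/-- The graded symmetric algebra `𝕊L` of a differential graded Lie algebra `L`. -/
abbrev SymAlg (L : DGLAOn k V) : Type u := RingQuot (SymRel L)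

/-- The canonical map `L → 𝕊L`. -/
def sGen (L : DGLAOn k V) : V →ₗ[k] SymAlg L :=
  (RingQuot.mkAlgHom k (SymRel L)).toLinearMap ∘ₗ TensorAlgebra.ι k

/-- `R` is the differential graded Poisson algebra structure on `𝕊L` with differential
extending `d` and bracket extending the Lie bracket of `L` as a graded biderivation. -/
def IsSymDGPA (L : DGLAOn k V) (R : DGPAOn k (SymAlg L)) : Prop :=
  (∀ x y : SymAlg L, R.mul x y = x * y) ∧
  R.one = 1 ∧
  (∀ {i : ℤ} {a : V}, a ∈ L.gr i → sGen L a ∈ R.gr i) ∧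
  (∀ a : V, R.d (sGen L a) = sGen L (L.d a)) ∧
  (∀ a b : V, R.br (sGen L a) (sGen L b) = sGen L (L.br a b))

/-- `S` is the graded semidirect product differential graded Lie algebra `L ⋊ L`. -/
def IsSemidirect (L : DGLAOn k V) (S : DGLAOn k (V × V)) : Prop :=
  (∀ n : ℤ, S.gr n = (L.gr n).prod (L.gr n)) ∧
  (∀ z : V × V, S.d z = (L.d z.1, L.d z.2)) ∧
  (∀ {i j : ℤ} {x₁ x₂ y₁ y₂ : V}, x₁ ∈ L.gr i → x₂ ∈ L.gr i → y₁ ∈ L.gr j → y₂ ∈ L.gr j →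
    S.br (x₁, x₂) (y₁, y₂) =
      (L.br x₂ y₁ - ((-1 : k) ^ (i * j)) • L.br y₂ x₁, L.br x₂ y₂))

end Lie

section Smash

variable {M : Type u} [AddCommGroup M] [Module k M]

/-- The generators `1#(ab) - a#b - (-1)^{|a||b|} b#a` of the ideal defining `A^E`
inside the smash product `A # U(A)`. -/
def smashGens (P : DGPAOn k M) : Set (M ⊗[k] ULie P.toLie) :=
  {z | ∃ (i j : ℤ) (a b : M), a ∈ P.gr i ∧ b ∈ P.gr j ∧
    z = P.one ⊗ₜ[k] uGen P.toLie (P.mul a b) - a ⊗ₜ[k] uGen P.toLie b -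
        ((-1 : k) ^ (i * j)) • (b ⊗ₜ[k] uGen P.toLie a)}

/-- The two-sided ideal generated by a set `T` in a differential graded algebra `S`. -/
def idealGen {N : Type u} [AddCommGroup N] [Module k N] (S : DGAOn k N) (T : Set N) :
    Submodule k N :=
  sInf {I : Submodule k N | T ⊆ I ∧ ∀ x ∈ I, ∀ y : N, S.mul x y ∈ I ∧ S.mul y x ∈ I}

/-- `S` is the smash product differential graded algebra `A # U(A)`. -/
def IsSmash (P : DGPAOn k M) (EU : DGAOn k (ULie P.toLie))
    (S : DGAOn k (M ⊗[k] ULie P.toLie)) : Prop :=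
  S.one = P.one ⊗ₜ[k] (1 : ULie P.toLie) ∧
  (∀ a b : M, S.mul (a ⊗ₜ[k] (1 : ULie P.toLie)) (b ⊗ₜ[k] (1 : ULie P.toLie)) =
      P.mul a b ⊗ₜ[k] (1 : ULie P.toLie)) ∧
  (∀ u v : ULie P.toLie, S.mul (P.one ⊗ₜ[k] u) (P.one ⊗ₜ[k] v) = P.one ⊗ₜ[k] (u * v)) ∧
  (∀ (a : M) (u : ULie P.toLie), S.mul (a ⊗ₜ[k] (1 : ULie P.toLie)) (P.one ⊗ₜ[k] u) =
      a ⊗ₜ[k] u) ∧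
  (∀ {i j : ℤ} {c b : M}, c ∈ P.gr i → b ∈ P.gr j →
    S.mul (P.one ⊗ₜ[k] uGen P.toLie c) (b ⊗ₜ[k] (1 : ULie P.toLie)) =
      P.br c b ⊗ₜ[k] (1 : ULie P.toLie) + ((-1 : k) ^ (i * j)) • (b ⊗ₜ[k] uGen P.toLie c)) ∧
  (∀ {i j : ℤ} {a : M} {u : ULie P.toLie}, a ∈ P.gr i → u ∈ EU.gr j →
      a ⊗ₜ[k] u ∈ S.gr (i + j)) ∧
  (∀ {i : ℤ} {a : M}, a ∈ P.gr i → ∀ u : ULie P.toLie,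
    S.d (a ⊗ₜ[k] u) = P.d a ⊗ₜ[k] u + ((-1 : k) ^ i) • (a ⊗ₜ[k] EU.d u))

/-- `R` is the quotient differential graded algebra structure of `S` by the ideal `I`. -/
def IsQuotDGA {N : Type u} [AddCommGroup N] [Module k N] (S : DGAOn k N)
    (I : Submodule k N) (R : DGAOn k (N ⧸ I)) : Prop :=
  (∀ n : ℤ, R.gr n = Submodule.map I.mkQ (S.gr n)) ∧
  R.one = I.mkQ S.one ∧
  (∀ x y : N, R.mul (I.mkQ x) (I.mkQ y) = I.mkQ (S.mul x y)) ∧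
  (∀ x : N, R.d (I.mkQ x) = I.mkQ (S.d x))

end Smash

section Op

variable {M N : Type u} [AddCommGroup M] [Module k M] [AddCommGroup N] [Module k N]

/-- `P'` is the opposite differential graded Poisson algebra of `P` (the product is
unchanged by graded commutativity, the bracket is negated). -/
def IsOpDGPA (P P' : DGPAOn k M) : Prop :=
  P'.gr = P.gr ∧ (∀ x y : M, P'.mul x y = P.mul x y) ∧ P'.one = P.one ∧ P'.d = P.d ∧
  (∀ x y : M, P'.br x y = - P.br x y)

/-- `E'` is the opposite differential graded algebra of `E` (with the Koszul sign). -/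
def IsOpDGA (E E' : DGAOn k N) : Prop :=
  E'.gr = E.gr ∧ E'.one = E.one ∧ E'.d = E.d ∧
  (∀ {i j : ℤ} {x y : N}, x ∈ E.gr i → y ∈ E.gr j →
    E'.mul x y = ((-1 : k) ^ (i * j)) • E.mul y x)

end Op

section UEnv

variable {M N : Type u} [AddCommGroup M] [Module k M] [AddCommGroup N] [Module k N]

/-- A pair `(f, g)` where `f : A → D` is a differential graded algebra map and
`g : A → D_L` is a differential graded Lie algebra map (into the graded commutator Lie
structure of `D`), satisfying the two compatibility conditions of the universal property
of the universal enveloping algebra of a differential graded Poisson algebra. -/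
def UEPair (P : DGPAOn k M) (D : DGAOn k N) (f g : M →ₗ[k] N) : Prop :=
  (∀ {n : ℤ} {x : M}, x ∈ P.gr n → f x ∈ D.gr n) ∧
  (∀ {n : ℤ} {x : M}, x ∈ P.gr n → g x ∈ D.gr n) ∧
  (∀ a b : M, f (P.mul a b) = D.mul (f a) (f b)) ∧
  f P.one = D.one ∧
  (∀ a : M, f (P.d a) = D.d (f a)) ∧
  (∀ a : M, g (P.d a) = D.d (g a)) ∧
  (∀ {i j : ℤ} {a b : M}, a ∈ P.gr i → b ∈ P.gr j →
    g (P.br a b) = D.mul (g a) (g b) - ((-1 : k) ^ (i * j)) • D.mul (g b) (g a)) ∧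
  (∀ {i j : ℤ} {a b : M}, a ∈ P.gr i → b ∈ P.gr j →
    f (P.br a b) = D.mul (g a) (f b) - ((-1 : k) ^ (i * j)) • D.mul (f b) (g a)) ∧
  (∀ {i j : ℤ} {a b : M}, a ∈ P.gr i → b ∈ P.gr j →
    g (P.mul a b) = D.mul (f a) (g b) + ((-1 : k) ^ (i * j)) • D.mul (f b) (g a))

/-- `(E, α, β)` is a universal enveloping algebra of the differential graded Poisson
algebra `P`. -/
def IsUEnv (P : DGPAOn k M) (E : DGAOn k N) (α β : M →ₗ[k] N) : Prop :=
  UEPair P E α β ∧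
  ∀ (D' : Type u) [AddCommGroup D'] [Module k D'] (D : DGAOn k D') (f g : M →ₗ[k] D'),
    UEPair P D f g →
    ∃! φ : N →ₗ[k] D',
      IsDGAHom E D φ ∧ (∀ a : M, φ (α a) = f a) ∧ (∀ a : M, φ (β a) = g a)

end UEnv

section IdealsQuotients

variable {M : Type u} [AddCommGroup M] [Module k M]

/-- `B` is a differential graded Poisson ideal of `P`. -/
def IsDGPIdeal (P : DGPAOn k M) (B : Submodule k M) : Prop :=
  (B = ⨆ n : ℤ, B ⊓ P.gr n) ∧
  (∀ x ∈ B, P.d x ∈ B) ∧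
  (∀ x ∈ B, ∀ a : M, P.mul x a ∈ B) ∧
  (∀ x ∈ B, ∀ a : M, P.mul a x ∈ B) ∧
  (∀ x ∈ B, ∀ a : M, P.br a x ∈ B)

/-- `B` is a differential graded Poisson subalgebra of `P`. -/
def IsDGPSubalg (P : DGPAOn k M) (B : Submodule k M) : Prop :=
  (B = ⨆ n : ℤ, B ⊓ P.gr n) ∧ P.one ∈ B ∧
  (∀ x ∈ B, ∀ y ∈ B, P.mul x y ∈ B) ∧
  (∀ x ∈ B, P.d x ∈ B) ∧
  (∀ x ∈ B, ∀ y ∈ B, P.br x y ∈ B)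

/-- `R` is the quotient differential graded Poisson algebra structure on `M ⧸ B`. -/
def IsQuotDGPA (P : DGPAOn k M) (B : Submodule k M) (R : DGPAOn k (M ⧸ B)) : Prop :=
  (∀ n : ℤ, R.gr n = Submodule.map B.mkQ (P.gr n)) ∧
  R.one = B.mkQ P.one ∧
  (∀ x y : M, R.mul (B.mkQ x) (B.mkQ y) = B.mkQ (P.mul x y)) ∧
  (∀ x : M, R.d (B.mkQ x) = B.mkQ (P.d x)) ∧
  (∀ x y : M, R.br (B.mkQ x) (B.mkQ y) = B.mkQ (P.br x y))

/-- `S` is the differential graded Poisson algebra structure induced on a differential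
graded Poisson subalgebra `B` of `P`. -/
def IsSubDGPA (P : DGPAOn k M) (B : Submodule k M) (S : DGPAOn k B) : Prop :=
  (∀ n : ℤ, S.gr n = Submodule.comap B.subtype (P.gr n)) ∧
  ((S.one : M) = P.one) ∧
  (∀ x y : B, (S.mul x y : M) = P.mul (x : M) (y : M)) ∧
  (∀ x : B, (S.d x : M) = P.d (x : M)) ∧
  (∀ x y : B, (S.br x y : M) = P.br (x : M) (y : M))

/-- The cocycles `ker d` of a differential graded Poisson algebra. -/
def Cocycles (P : DGPAOn k M) : Submodule k M := LinearMap.ker P.d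

/-- The coboundaries `im d`, viewed inside the cocycles. -/
def CobIn (P : DGPAOn k M) : Submodule k (Cocycles P) :=
  Submodule.comap (Cocycles P).subtype (LinearMap.range P.d)

/-- The cohomology `H(A) = ker d / im d` of a differential graded Poisson algebra. -/
abbrev Cohom (P : DGPAOn k M) : Type u := Cocycles P ⧸ CobIn P

/-- The class map `ker d → H(A)`. -/
def cohCls (P : DGPAOn k M) : Cocycles P →ₗ[k] Cohom P := (CobIn P).mkQ

/-- `R` is the graded Poisson algebra structure on the cohomology of `P` (a differential
graded Poisson algebra structure with zero differential, with the induced grading,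
product and bracket). -/
def IsCohomDGPA (P : DGPAOn k M) (R : DGPAOn k (Cohom P)) : Prop :=
  R.d = 0 ∧
  (∀ n : ℤ, R.gr n =
    Submodule.map (cohCls P) (Submodule.comap (Cocycles P).subtype (P.gr n))) ∧
  (∀ h : P.one ∈ Cocycles P, R.one = cohCls P ⟨P.one, h⟩) ∧
  (∀ (a b : Cocycles P) (h : P.mul (a : M) (b : M) ∈ Cocycles P),
    R.mul (cohCls P a) (cohCls P b) = cohCls P ⟨P.mul (a : M) (b : M), h⟩) ∧
  (∀ (a b : Cocycles P) (h : P.br (a : M) (b : M) ∈ Cocycles P),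
    R.br (cohCls P a) (cohCls P b) = cohCls P ⟨P.br (a : M) (b : M), h⟩)

end IdealsQuotients

end Defs

section ModuleDefs

variable {k : Type u} [Field k]

/-- A left differential graded module structure on `X` over the differential graded
algebra `E`. -/
structure DGModOn {N : Type u} [AddCommGroup N] [Module k N] (E : DGAOn k N)
    (X : Type u) [AddCommGroup X] [Module k X] where
  grm : ℤ → Submodule k X
  decomp : DirectSum.Decomposition grm
  act : N →ₗ[k] X →ₗ[k] X
  act_one : ∀ x : X, act E.one x = x
  act_mul : ∀ (r s : N) (x : X), act (E.mul r s) x = act r (act s x)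
  act_mem : ∀ {i j : ℤ} {r : N} {x : X}, r ∈ E.gr i → x ∈ grm j → act r x ∈ grm (i + j)
  dm : X →ₗ[k] X
  dm_mem : ∀ {i : ℤ} {x : X}, x ∈ grm i → dm x ∈ grm (i + 1)
  dm_sq : ∀ x : X, dm (dm x) = 0
  dm_act : ∀ {i : ℤ} {r : N}, r ∈ E.gr i → ∀ x : X,
    dm (act r x) = act (E.d r) x + ((-1 : k) ^ i) • act r (dm x)

/-- A left differential graded Poisson module structure on `X` over the differential
graded Poisson algebra `P`. -/
structure DGPModOn {M : Type u} [AddCommGroup M] [Module k M] (P : DGPAOn k M)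
    (X : Type u) [AddCommGroup X] [Module k X] where
  grm : ℤ → Submodule k X
  decomp : DirectSum.Decomposition grm
  act : M →ₗ[k] X →ₗ[k] X
  act_one : ∀ x : X, act P.one x = x
  act_mul : ∀ (a b : M) (x : X), act (P.mul a b) x = act a (act b x)
  act_mem : ∀ {i j : ℤ} {a : M} {x : X}, a ∈ P.gr i → x ∈ grm j → act a x ∈ grm (i + j)
  dm : X →ₗ[k] X
  dm_mem : ∀ {i : ℤ} {x : X}, x ∈ grm i → dm x ∈ grm (i + 1)
  dm_sq : ∀ x : X, dm (dm x) = 0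
  dm_act : ∀ {i : ℤ} {a : M}, a ∈ P.gr i → ∀ x : X,
    dm (act a x) = act (P.d a) x + ((-1 : k) ^ i) • act a (dm x)
  bact : M →ₗ[k] X →ₗ[k] X
  bact_mem : ∀ {i j : ℤ} {a : M} {x : X}, a ∈ P.gr i → x ∈ grm j → bact a x ∈ grm (i + j)
  bact_amod : ∀ {i j : ℤ} {a b : M}, a ∈ P.gr i → b ∈ P.gr j → ∀ x : X,
    bact a (act b x) = act (P.br a b) x + ((-1 : k) ^ (i * j)) • act b (bact a x)
  bact_mulact : ∀ {i j : ℤ} {a b : M}, a ∈ P.gr i → b ∈ P.gr j → ∀ x : X,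
    bact (P.mul a b) x = act a (bact b x) + ((-1 : k) ^ (i * j)) • act b (bact a x)
  bact_jacobi : ∀ {i j : ℤ} {a b : M}, a ∈ P.gr i → b ∈ P.gr j → ∀ x : X,
    bact a (bact b x) = bact (P.br a b) x + ((-1 : k) ^ (i * j)) • bact b (bact a x)
  dm_bact : ∀ {i : ℤ} {a : M}, a ∈ P.gr i → ∀ x : X,
    dm (bact a x) = bact (P.d a) x + ((-1 : k) ^ i) • bact a (dm x)

/-- A morphism of left differential graded modules. -/
def IsDGModHom {N X Y : Type u} [AddCommGroup N] [Module k N]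
    [AddCommGroup X] [Module k X] [AddCommGroup Y] [Module k Y]
    {E : DGAOn k N} (W : DGModOn E X) (W' : DGModOn E Y) (f : X →ₗ[k] Y) : Prop :=
  (∀ {n : ℤ} {x : X}, x ∈ W.grm n → f x ∈ W'.grm n) ∧
  (∀ x : X, f (W.dm x) = W'.dm (f x)) ∧
  (∀ (r : N) (x : X), f (W.act r x) = W'.act r (f x))

/-- A morphism of left differential graded Poisson modules. -/
def IsDGPModHom {M X Y : Type u} [AddCommGroup M] [Module k M]
    [AddCommGroup X] [Module k X] [AddCommGroup Y] [Module k Y]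
    {P : DGPAOn k M} (V : DGPModOn P X) (V' : DGPModOn P Y) (f : X →ₗ[k] Y) : Prop :=
  (∀ {n : ℤ} {x : X}, x ∈ V.grm n → f x ∈ V'.grm n) ∧
  (∀ x : X, f (V.dm x) = V'.dm (f x)) ∧
  (∀ (a : M) (x : X), f (V.act a x) = V'.act a (f x)) ∧
  (∀ (a : M) (x : X), f (V.bact a x) = V'.bact a (f x))

/-- The correspondence between a differential graded Poisson module structure over `P`
and a differential graded module structure over `A^e` on the same space. -/
def ModCorr {M X : Type u} [AddCommGroup M] [Module k M] [AddCommGroup X] [Module k X]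
    {P : DGPAOn k M} {E : DGAOn k (Env P)}
    (V : DGPModOn P X) (W : DGModOn E X) : Prop :=
  W.grm = V.grm ∧ W.dm = V.dm ∧
  (∀ (a : M) (x : X), W.act (mgen P a) x = V.act a x) ∧
  (∀ (a : M) (x : X), W.act (hgen P a) x = V.bact a x)

end ModuleDefs

section Helpers

variable {k : Type u} [Field k]

/-- The underlying space of a DGA, as a type carrying a ring structure. -/
def AlgOf {N : Type u} [AddCommGroup N] [Module k N] (_D : DGAOn k N) : Type u := N

instance {N : Type u} [AddCommGroup N] [Module k N] (D : DGAOn k N) : Ring (AlgOf D) :=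
  { (inferInstanceAs (AddCommGroup N) : AddCommGroup (AlgOf D)) with
    mul := fun x y => D.mul x y
    one := D.one
    mul_assoc := D.mul_assoc
    one_mul := D.one_mul
    mul_one := D.mul_one
    left_distrib := fun x y z => (D.mul x).map_add y z
    right_distrib := fun x y z => D.mul.map_add₂ x y z
    zero_mul := fun x => D.mul.map_zero₂ x
    mul_zero := fun x => (D.mul x).map_zero }

instance {N : Type u} [AddCommGroup N] [Module k N] (D : DGAOn k N) : Module k (AlgOf D) :=
  inferInstanceAs (Module k N)

instance {N : Type u} [AddCommGroup N] [Module k N] (D : DGAOn k N) : Algebra k (AlgOf D) :=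
  Algebra.ofModule (fun r x y => D.mul.map_smul₂ r x y) (fun r x y => (D.mul x).map_smul r y)

theorem quot_induction {V : Type u} [AddCommGroup V] [Module k V]
    (r : TensorAlgebra k V → TensorAlgebra k V → Prop) (W : Submodule k (RingQuot r))
    (h1 : (1 : RingQuot r) ∈ W)
    (hm : ∀ v : V, ∀ x ∈ W, RingQuot.mkAlgHom k r (TensorAlgebra.ι k v) * x ∈ W) : W = ⊤ := by
  have key : ∀ t : TensorAlgebra k V, ∀ x ∈ W, RingQuot.mkAlgHom k r t * x ∈ W := by
    intro t
    induction t using TensorAlgebra.induction with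
    | algebraMap c =>
      intro x hx
      rw [AlgHom.commutes, ← Algebra.smul_def]
      exact W.smul_mem _ hx
    | ι v => exact hm v
    | mul a b ha hb =>
      intro x hx
      rw [map_mul, mul_assoc]
      exact ha _ (hb _ hx)
    | add a b ha hb =>
      intro x hx
      rw [map_add, add_mul]
      exact W.add_mem (ha _ hx) (hb _ hx)
  rw [eq_top_iff]
  intro x _
  obtain ⟨t, rfl⟩ := RingQuot.mkAlgHom_surjective k r x
  simpa using key t 1 h1

theorem gr_le_of_iSup {N : Type u} [AddCommGroup N] [Module k N] (gr G : ℤ → Submodule k N)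
    (dec : DirectSum.Decomposition gr) (hG : ∀ n, G n ≤ gr n) (ht : ⨆ n, G n = ⊤) (n : ℤ) :
    gr n ≤ G n := by
  letI := dec
  have key : ∀ y : N, ((DirectSum.decompose gr y n : gr n) : N) ∈ G n := by
    intro y
    have hy : y ∈ ⨆ n, G n := ht ▸ Submodule.mem_top
    induction hy using Submodule.iSup_induction' with
    | mem i x hx =>
      by_cases h : i = n
      · subst h
        rw [DirectSum.decompose_of_mem_same gr (hG _ hx)]
        exact hx
      · rw [DirectSum.decompose_of_mem_ne gr (hG _ hx) h]
        exact zero_mem _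
    | zero => simp
    | add x y _ _ hx hy =>
      rw [DirectSum.decompose_add]
      exact add_mem hx hy
  intro x hx
  have := key x
  rwa [DirectSum.decompose_of_mem_same gr hx] at this

theorem homog_induction {N : Type u} [AddCommGroup N] [Module k N] (gr : ℤ → Submodule k N)
    (dec : DirectSum.Decomposition gr) {p : N → Prop} (h0 : p 0)
    (hh : ∀ i, ∀ x ∈ gr i, p x) (ha : ∀ x y, p x → p y → p (x + y)) (x : N) : p x := by
  letI := dec
  exact DirectSum.Decomposition.inductionOn gr h0 (fun m => hh _ _ m.2) ha x

theorem DGAOn.d_one {N : Type u} [AddCommGroup N] [Module k N] (D : DGAOn k N) :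
    D.d D.one = 0 := by
  have h := D.d_mul D.one_mem D.one_mem
  rw [D.one_mul, D.one_mul, D.mul_one, zpow_zero, one_smul] at h
  simpa using h

theorem DGPAOn.d_one {N : Type u} [AddCommGroup N] [Module k N] (D : DGPAOn k N) :
    D.d D.one = 0 := by
  have h := D.d_mul D.one_mem D.one_mem
  rw [D.one_mul, D.one_mul, D.mul_one, zpow_zero, one_smul] at h
  simpa using h

variable {M : Type u} [AddCommGroup M] [Module k M]

theorem mgen_one (P : DGPAOn k M) : mgen P P.one = 1 := by
  have := RingQuot.mkAlgHom_rel k (EnvRel.relone (P := P))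
  simpa [mgen] using this

theorem mgen_mul (P : DGPAOn k M) (a b : M) :
    mgen P (P.mul a b) = mgen P a * mgen P b := by
  have := RingQuot.mkAlgHom_rel k (EnvRel.relmul (P := P) a b)
  simpa [mgen] using this

theorem hgen_mul (P : DGPAOn k M) {i j : ℤ} {a b : M} (ha : a ∈ P.gr i) (hb : b ∈ P.gr j) :
    hgen P (P.mul a b) =
      mgen P a * hgen P b + ((-1 : k) ^ (i * j)) • (mgen P b * hgen P a) := by
  have := RingQuot.mkAlgHom_rel k (EnvRel.relhmul ha hb)
  rw [map_add, map_smul, map_mul, map_mul] at this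
  exact this

theorem mgen_br (P : DGPAOn k M) {i j : ℤ} {a b : M} (ha : a ∈ P.gr i) (hb : b ∈ P.gr j) :
    mgen P (P.br a b) =
      hgen P a * mgen P b - ((-1 : k) ^ (i * j)) • (mgen P b * hgen P a) := by
  have := RingQuot.mkAlgHom_rel k (EnvRel.relmbr ha hb)
  rw [map_sub, map_smul, map_mul, map_mul] at this
  exact this

theorem hgen_br (P : DGPAOn k M) {i j : ℤ} {a b : M} (ha : a ∈ P.gr i) (hb : b ∈ P.gr j) :
    hgen P (P.br a b) =
      hgen P a * hgen P b - ((-1 : k) ^ (i * j)) • (hgen P b * hgen P a) := by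
  have := RingQuot.mkAlgHom_rel k (EnvRel.relhbr ha hb)
  rw [map_sub, map_smul, map_mul, map_mul] at this
  exact this

theorem uGen_br (L : DGLAOn k M) {i j : ℤ} {a b : M} (ha : a ∈ L.gr i) (hb : b ∈ L.gr j) :
    uGen L (L.br a b) =
      uGen L a * uGen L b - ((-1 : k) ^ (i * j)) • (uGen L b * uGen L a) := by
  have := RingQuot.mkAlgHom_rel k (LieRel.rel ha hb)
  rw [map_sub, map_smul, map_mul, map_mul] at this
  exact this.symm

theorem env_induction (P : DGPAOn k M) (W : Submodule k (Env P)) (h1 : (1 : Env P) ∈ W)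
    (hm : ∀ a : M, ∀ x ∈ W, mgen P a * x ∈ W) (hh : ∀ a : M, ∀ x ∈ W, hgen P a * x ∈ W) :
    W = ⊤ := by
  refine quot_induction _ W h1 ?_
  rintro ⟨a, b⟩ x hx
  have : RingQuot.mkAlgHom k (EnvRel P) (TensorAlgebra.ι k ((a, b) : M × M))
      = mgen P a + hgen P b := by
    rw [mgen, hgen]
    simp only [LinearMap.comp_apply, AlgHom.toLinearMap_apply, LinearMap.inl_apply,
      LinearMap.inr_apply, ← map_add, Prod.mk_add_mk, add_zero, zero_add]
  rw [this, add_mul]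
  exact add_mem (hm a x hx) (hh b x hx)

theorem exists_env_lift (P : DGPAOn k M) {N : Type u} [AddCommGroup N] [Module k N]
    (D : DGAOn k N) (f g : M →ₗ[k] N)
    (h1 : f P.one = D.one)
    (h2 : ∀ a b, f (P.mul a b) = D.mul (f a) (f b))
    (h3 : ∀ {i j : ℤ} {a b : M}, a ∈ P.gr i → b ∈ P.gr j →
      g (P.mul a b) = D.mul (f a) (g b) + ((-1 : k) ^ (i * j)) • D.mul (f b) (g a))
    (h4 : ∀ {i j : ℤ} {a b : M}, a ∈ P.gr i → b ∈ P.gr j →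
      f (P.br a b) = D.mul (g a) (f b) - ((-1 : k) ^ (i * j)) • D.mul (f b) (g a))
    (h5 : ∀ {i j : ℤ} {a b : M}, a ∈ P.gr i → b ∈ P.gr j →
      g (P.br a b) = D.mul (g a) (g b) - ((-1 : k) ^ (i * j)) • D.mul (g b) (g a)) :
    ∃ φ : Env P →ₗ[k] N, (∀ x y, φ (x * y) = D.mul (φ x) (φ y)) ∧ φ 1 = D.one ∧
      (∀ a, φ (mgen P a) = f a) ∧ (∀ a, φ (hgen P a) = g a) := by
  let F : M × M →ₗ[k] AlgOf D := LinearMap.coprod (M₃ := N) f g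
  have F1 : ∀ a : M, F (a, 0) = f a := fun a => by
    change LinearMap.coprod f g (a, 0) = _
    simp
  have F2 : ∀ a : M, F (0, a) = g a := fun a => by
    change LinearMap.coprod f g (0, a) = _
    simp
  let T : TensorAlgebra k (M × M) →ₐ[k] AlgOf D := TensorAlgebra.lift k F
  have hT : ∀ x, T (TensorAlgebra.ι k x) = F x := fun x => TensorAlgebra.lift_ι_apply F x
  have hrel : ∀ ⦃x y⦄, EnvRel P x y → T x = T y := by
    intro x y h
    induction h with
    | relone => rw [hT, F1, map_one]; exact h1
    | relmul a b => rw [map_mul, hT, hT, hT, F1, F1, F1]; exact h2 a b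
    | relhmul ha hb =>
      rw [map_add, map_smul, map_mul, map_mul, hT, hT, hT, hT, hT, F1, F1, F2, F2, F2]
      exact h3 ha hb
    | relmbr ha hb =>
      rw [map_sub, map_smul, map_mul, map_mul, hT, hT, hT, F1, F1, F2]
      exact h4 ha hb
    | relhbr ha hb =>
      rw [map_sub, map_smul, map_mul, map_mul, hT, hT, hT, F2, F2, F2]
      exact h5 ha hb
  let Φ : Env P →ₐ[k] AlgOf D := RingQuot.liftAlgHom k ⟨T, hrel⟩
  have hΦ : ∀ t, Φ (RingQuot.mkAlgHom k (EnvRel P) t) = T t :=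
    fun t => RingQuot.liftAlgHom_mkAlgHom_apply k T hrel t
  refine ⟨(Φ.toLinearMap : Env P →ₗ[k] AlgOf D), fun x y => map_mul Φ x y, map_one Φ, ?_, ?_⟩
  · intro a
    exact (hΦ _).trans ((hT _).trans (F1 a))
  · intro a
    exact (hΦ _).trans ((hT _).trans (F2 a))

theorem exists_u_lift (P : DGPAOn k M) :
    ∃ H : ULie P.toLie →ₐ[k] Env P, ∀ a, H (uGen P.toLie a) = hgen P a := by
  let T : TensorAlgebra k M →ₐ[k] Env P := TensorAlgebra.lift k (hgen P)
  have hT : ∀ x, T (TensorAlgebra.ι k x) = hgen P x := fun x => TensorAlgebra.lift_ι_apply _ x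
  have hrel : ∀ ⦃x y⦄, LieRel P.toLie x y → T x = T y := by
    intro x y h
    induction h with
    | rel ha hb =>
      rw [map_sub, map_smul, map_mul, map_mul, hT, hT, hT]
      exact (hgen_br P ha hb).symm
  refine ⟨RingQuot.liftAlgHom k ⟨T, hrel⟩, fun a => ?_⟩
  exact (RingQuot.liftAlgHom_mkAlgHom_apply k T hrel _).trans (hT a)

theorem env_hom_dg (P : DGPAOn k M) (E : DGAOn k (Env P)) (hE : IsEnvDGA P E)
    {N : Type u} [AddCommGroup N] [Module k N] (D : DGAOn k N) (φ : Env P →ₗ[k] N)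
    (hmul : ∀ x y, φ (x * y) = D.mul (φ x) (φ y)) (hone : φ 1 = D.one)
    (hm : ∀ {i : ℤ} {a : M}, a ∈ P.gr i → φ (mgen P a) ∈ D.gr i)
    (hh : ∀ {i : ℤ} {a : M}, a ∈ P.gr i → φ (hgen P a) ∈ D.gr i)
    (hmd : ∀ a, φ (mgen P (P.d a)) = D.d (φ (mgen P a)))
    (hhd : ∀ a, φ (hgen P (P.d a)) = D.d (φ (hgen P a))) : IsDGAHom E D φ := by
  obtain ⟨e1, e2, e3, e4, e5, e6⟩ := hE
  let G : ℤ → Submodule k (Env P) := fun n =>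
    E.gr n ⊓ (D.gr n).comap φ ⊓ LinearMap.ker (φ ∘ₗ E.d - D.d ∘ₗ φ)
  have hG : ∀ n x, x ∈ G n ↔ (x ∈ E.gr n ∧ φ x ∈ D.gr n) ∧ φ (E.d x) = D.d (φ x) := by
    intro n x
    simp [G, sub_eq_zero]
  have hGmul : ∀ i j x y, x ∈ G i → y ∈ G j → x * y ∈ G (i + j) := by
    intro i j x y hx hy
    rw [hG] at hx hy ⊢
    obtain ⟨⟨a1, a2⟩, a3⟩ := hx
    obtain ⟨⟨b1, b2⟩, b3⟩ := hy
    refine ⟨⟨?_, ?_⟩, ?_⟩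
    · rw [← e1]; exact E.mul_mem a1 b1
    · rw [hmul]; exact D.mul_mem a2 b2
    · rw [← e1, E.d_mul a1 b1, e1, e1, e1, map_add, map_smul, hmul, hmul, hmul, a3, b3,
        D.d_mul a2 b2]
  have hone' : (1 : Env P) ∈ G 0 := by
    rw [hG]
    refine ⟨⟨e2 ▸ E.one_mem, hone ▸ D.one_mem⟩, ?_⟩
    rw [hone, D.d_one, ← e2, E.d_one, map_zero]
  have hgm : ∀ i a, a ∈ P.gr i → mgen P a ∈ G i := fun i a ha => by
    rw [hG]; exact ⟨⟨e3 ha, hm ha⟩, by rw [e5, hmd]⟩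
  have hgh : ∀ i a, a ∈ P.gr i → hgen P a ∈ G i := fun i a ha => by
    rw [hG]; exact ⟨⟨e4 ha, hh ha⟩, by rw [e6, hhd]⟩
  have hl : ∀ i z, z ∈ G i → ∀ x ∈ ⨆ n, G n, z * x ∈ ⨆ n, G n := by
    intro i z hz x hx
    induction hx using Submodule.iSup_induction' with
    | mem j x hx => exact Submodule.mem_iSup_of_mem _ (hGmul i j z x hz hx)
    | zero => simp
    | add x y _ _ hx hy => rw [mul_add]; exact add_mem hx hy
  have htop : ⨆ n, G n = ⊤ := by
    refine env_induction P _ (Submodule.mem_iSup_of_mem _ hone') ?_ ?_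
    · intro a x hx
      induction a using homog_induction P.gr P.decomp with
      | h0 => simp
      | hh i a ha => exact hl i _ (hgm i a ha) x hx
      | ha a b h1 h2 => rw [map_add, add_mul]; exact add_mem h1 h2
    · intro a x hx
      induction a using homog_induction P.gr P.decomp with
      | h0 => simp
      | hh i a ha => exact hl i _ (hgh i a ha) x hx
      | ha a b h1 h2 => rw [map_add, add_mul]; exact add_mem h1 h2
  refine ⟨?_, ?_, ?_, ?_⟩
  · intro n x hx
    have := gr_le_of_iSup E.gr G E.decomp (fun n x hx => ((hG n x).1 hx).1.1) htop n hx
    exact ((hG n x).1 this).1.2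
  · intro x y; rw [e1, hmul]
  · rw [e2, hone]
  · intro x
    have hx : x ∈ ⨆ n, G n := htop ▸ Submodule.mem_top
    induction hx using Submodule.iSup_induction' with
    | mem j x hx => exact ((hG j x).1 hx).2
    | zero => simp
    | add x y _ _ hx hy => simp only [map_add, hx, hy]

end Helpers

/-- `A^e ≅ A^E` as differential graded algebras, via the map determined by
`m_a ↦ class of a#1` and `h_a ↦ class of 1#a`. -/
theorem stmt_9 (k : Type u) [Field k] (M : Type u) [AddCommGroup M] [Module k M]
    (P : DGPAOn k M)
    (E : DGAOn k (Env P)) (hE : IsEnvDGA P E)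
    (EU : DGAOn k (ULie P.toLie)) (hEU : IsULieDGA P.toLie EU)
    (S : DGAOn k (M ⊗[k] ULie P.toLie)) (hS : IsSmash P EU S)
    (I : Submodule k (M ⊗[k] ULie P.toLie)) (hI : I = idealGen S (smashGens P))
    (R : DGAOn k ((M ⊗[k] ULie P.toLie) ⧸ I)) (hR : IsQuotDGA S I R) :
    ∃ φ : Env P →ₗ[k] (M ⊗[k] ULie P.toLie) ⧸ I,
      IsDGAHom E R φ ∧ Function.Bijective φ ∧
      (∀ a : M, φ (mgen P a) = I.mkQ (a ⊗ₜ[k] (1 : ULie P.toLie))) ∧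
      (∀ a : M, φ (hgen P a) = I.mkQ (P.one ⊗ₜ[k] uGen P.toLie a)) := by
  obtain ⟨s1, s2, s3, s4, s5, s6, s7⟩ := hS
  obtain ⟨r1, r2, r3, r4⟩ := hR
  obtain ⟨u1, u2, u3, u4⟩ := hEU
  have hEU1 : (1 : ULie P.toLie) ∈ EU.gr 0 := u2 ▸ EU.one_mem
  have hEUd1 : EU.d (1 : ULie P.toLie) = 0 := u2 ▸ EU.d_one
  have hgenI : smashGens P ⊆ I := by
    intro z hz
    rw [hI]
    simp only [idealGen, SetLike.mem_coe, Submodule.mem_sInf]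
    exact fun J hJ => hJ.1 hz
  -- the two structure maps
  let f : M →ₗ[k] (M ⊗[k] ULie P.toLie) ⧸ I :=
    I.mkQ ∘ₗ (TensorProduct.mk k M (ULie P.toLie)).flip 1
  let g : M →ₗ[k] (M ⊗[k] ULie P.toLie) ⧸ I :=
    I.mkQ ∘ₗ (TensorProduct.mk k M (ULie P.toLie) P.one) ∘ₗ uGen P.toLie
  have hf : ∀ a, f a = I.mkQ (a ⊗ₜ[k] (1 : ULie P.toLie)) := fun a => rfl
  have hg : ∀ a, g a = I.mkQ (P.one ⊗ₜ[k] uGen P.toLie a) := fun a => rfl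
  obtain ⟨φ, φmul, φone, φm, φh⟩ := exists_env_lift P R f g
    (by rw [hf, r2, s1])
    (by intro a b; rw [hf, hf, hf, r3, s2])
    (by
      intro i j a b ha hb
      rw [hg, hg, hg, hf, hf, r3, r3, s4, s4, ← map_smul, ← map_add, ← sub_eq_zero, ← map_sub]
      rw [Submodule.mkQ_apply, Submodule.Quotient.mk_eq_zero]
      apply hgenI
      exact ⟨i, j, a, b, ha, hb, by abel⟩)
    (by
      intro i j a b ha hb
      rw [hg, hf, hf, r3, r3, s4, s5 ha hb, map_add, map_smul, add_sub_cancel_right])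
    (by
      intro i j a b ha hb
      rw [hg, hg, hg, r3, r3, s3, s3, ← map_smul, ← map_sub, ← TensorProduct.tmul_smul,
        ← TensorProduct.tmul_sub]
      rw [← uGen_br P.toLie ha hb]
      rfl)
  refine ⟨φ, ?_, ?_, φm, φh⟩
  · refine env_hom_dg P E hE R φ φmul φone ?_ ?_ ?_ ?_
    · intro i a ha
      rw [φm, hf, r1]
      refine Submodule.mem_map_of_mem ?_
      simpa using s6 ha hEU1
    · intro i a ha
      rw [φh, hg, r1]
      refine Submodule.mem_map_of_mem ?_
      simpa using s6 P.one_mem (u3 ha)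
    · intro a
      induction a using homog_induction P.gr P.decomp with
      | h0 => simp
      | hh i a ha =>
        rw [φm, φm, hf, hf, r4, s7 ha, hEUd1, TensorProduct.tmul_zero, smul_zero, add_zero]
      | ha a b h1 h2 => simp only [map_add, h1, h2]
    · intro a
      rw [φh, φh, hg, hg, r4, s7 P.one_mem, P.d_one, TensorProduct.zero_tmul, zero_add,
        zpow_zero, one_smul, u4]
      rfl
  · obtain ⟨H, hH⟩ := exists_u_lift P
    let b : M ⊗[k] ULie P.toLie →ₗ[k] Env P :=
      TensorProduct.lift ((LinearMap.mul k (Env P)).compl₁₂ (mgen P) H.toLinearMap)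
    have hb : ∀ a u, b (a ⊗ₜ u) = mgen P a * H u := fun a u => by
      simp [b]
    have bm : ∀ a z, b (S.mul (a ⊗ₜ 1) z) = mgen P a * b z := by
      intro a z
      induction z using TensorProduct.induction_on with
      | zero => simp
      | tmul c v => rw [← s4 c v, ← S.mul_assoc, s2, s4, s4, hb, hb, mgen_mul, mul_assoc]
      | add x y hx hy => simp only [map_add, mul_add, hx, hy]
    have bc : ∀ c z, b (S.mul (P.one ⊗ₜ uGen P.toLie c) z) = hgen P c * b z := by
      intro c z
      induction c using homog_induction P.gr P.decomp with
      | h0 => simp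
      | hh i c hc =>
        induction z using TensorProduct.induction_on with
        | zero => simp
        | tmul e v =>
          induction e using homog_induction P.gr P.decomp with
          | h0 => simp
          | hh j e he =>
            rw [← s4 e v, ← S.mul_assoc, s5 hc he, map_add, map_smul, LinearMap.add_apply,
              LinearMap.smul_apply, s4, ← s4 e (uGen P.toLie c), S.mul_assoc, s3, s4, s4,
              map_add, map_smul, hb, hb, hb, map_mul, hH, mgen_br P hc he, sub_mul,
              smul_mul_assoc, mul_assoc, mul_assoc, sub_add_cancel]
          | ha x y hx hy => simp only [TensorProduct.add_tmul, map_add, mul_add, hx, hy]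
        | add x y hx hy => simp only [map_add, mul_add, hx, hy]
      | ha x y hx hy =>
        simp only [TensorProduct.tmul_add, map_add, add_mul, hx, hy, LinearMap.add_apply]
    have bu : ∀ u z, b (S.mul (P.one ⊗ₜ u) z) = H u * b z := by
      let W : Submodule k (ULie P.toLie) :=
        { carrier := {u | ∀ z, b (S.mul (P.one ⊗ₜ u) z) = H u * b z}
          zero_mem' := by intro z; simp
          add_mem' := by
            intro x y hx hy z
            simp only [TensorProduct.tmul_add, map_add, add_mul, LinearMap.add_apply]
            rw [hx z, hy z]
          smul_mem' := by
            intro c x hx z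
            simp only [TensorProduct.tmul_smul, map_smul, smul_mul_assoc, LinearMap.smul_apply]
            rw [hx z] }
      have hW : W = ⊤ := by
        refine quot_induction _ W ?_ ?_
        · intro z
          rw [← s1, S.one_mul, map_one, one_mul]
        · intro v x hx z
          change b (S.mul (P.one ⊗ₜ (uGen P.toLie v * x)) z) = H (uGen P.toLie v * x) * b z
          rw [← s3, S.mul_assoc, bc, hx z, map_mul, hH, mul_assoc]
      intro u
      have : u ∈ W := hW ▸ Submodule.mem_top
      exact this
    have bmul : ∀ x y, b (S.mul x y) = b x * b y := by
      intro x y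
      induction x using TensorProduct.induction_on with
      | zero => simp
      | tmul a u => rw [← s4 a u, S.mul_assoc, bm, bu, s4, hb, mul_assoc]
      | add x y hx hy => simp only [map_add, add_mul, LinearMap.add_apply, hx, hy]
    have hIb : I ≤ LinearMap.ker b := by
      rw [hI]
      refine sInf_le ⟨?_, ?_⟩
      · rintro z ⟨i, j, a, c, ha, hc, rfl⟩
        rw [SetLike.mem_coe, LinearMap.mem_ker, map_sub, map_sub, map_smul, hb, hb, hb, hH, hH,
          hH, mgen_one, one_mul, hgen_mul P ha hc]
        abel
      · intro x hx y
        rw [LinearMap.mem_ker] at hx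
        rw [LinearMap.mem_ker, LinearMap.mem_ker, bmul, bmul, hx]
        simp
    let β : (M ⊗[k] ULie P.toLie) ⧸ I →ₗ[k] Env P := I.liftQ b hIb
    have hβ : ∀ x, β (I.mkQ x) = b x := fun x => Submodule.liftQ_apply _ _ _
    have βmul : ∀ x y, β (R.mul x y) = β x * β y := by
      intro x y
      obtain ⟨x, rfl⟩ := I.mkQ_surjective x
      obtain ⟨y, rfl⟩ := I.mkQ_surjective y
      rw [r3, hβ, hβ, hβ, bmul]
    have left : ∀ x, β (φ x) = x := by
      have : LinearMap.ker (β ∘ₗ φ - LinearMap.id) = ⊤ := by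
        refine env_induction P _ ?_ ?_ ?_
        · rw [LinearMap.mem_ker, LinearMap.sub_apply, LinearMap.comp_apply, φone, r2, hβ, s1, hb,
            mgen_one, map_one, mul_one, LinearMap.id_apply, sub_self]
        · intro a x hx
          rw [LinearMap.mem_ker, LinearMap.sub_apply, LinearMap.comp_apply, LinearMap.id_apply,
            sub_eq_zero] at hx ⊢
          rw [φmul, βmul, hx, φm, hf, hβ, hb, map_one, mul_one]
        · intro a x hx
          rw [LinearMap.mem_ker, LinearMap.sub_apply, LinearMap.comp_apply, LinearMap.id_apply,
            sub_eq_zero] at hx ⊢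
          rw [φmul, βmul, hx, φh, hg, hβ, hb, mgen_one, one_mul, hH]
      intro x
      have hx : x ∈ LinearMap.ker (β ∘ₗ φ - LinearMap.id) := this ▸ Submodule.mem_top
      rwa [LinearMap.mem_ker, LinearMap.sub_apply, LinearMap.comp_apply, LinearMap.id_apply,
            sub_eq_zero] at hx
    have φH : ∀ u, φ (H u) = I.mkQ (P.one ⊗ₜ u) := by
      have : LinearMap.ker (φ ∘ₗ H.toLinearMap -
          I.mkQ ∘ₗ (TensorProduct.mk k M (ULie P.toLie) P.one)) = ⊤ := by
        refine quot_induction _ _ ?_ ?_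
        · rw [LinearMap.mem_ker, LinearMap.sub_apply, sub_eq_zero]
          change φ (H 1) = I.mkQ (P.one ⊗ₜ 1)
          rw [map_one, φone, r2, s1]
        · intro v x hx
          rw [LinearMap.mem_ker, LinearMap.sub_apply, sub_eq_zero] at hx ⊢
          change φ (H x) = I.mkQ (P.one ⊗ₜ x) at hx
          change φ (H (uGen P.toLie v * x)) = I.mkQ (P.one ⊗ₜ (uGen P.toLie v * x))
          rw [map_mul, φmul, hx, hH, φh, hg, r3, s3]
      intro u
      have hx := this ▸ (Submodule.mem_top : u ∈ ⊤)
      rw [LinearMap.mem_ker, LinearMap.sub_apply, sub_eq_zero] at hx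
      exact hx
    have right : ∀ y, φ (β y) = y := by
      intro y
      obtain ⟨z, rfl⟩ := I.mkQ_surjective y
      rw [hβ]
      induction z using TensorProduct.induction_on with
      | zero => simp
      | tmul a u => rw [hb, φmul, φm, hf, φH, r3, s4]
      | add x y hx hy => simp only [map_add, hx, hy]
    exact ⟨Function.LeftInverse.injective left, Function.RightInverse.surjective right⟩

end DGPaper

end
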